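/- arXiv:1612.07657 — 2 statements merged into one kernel-verified Lean document; each statement's English description precedes it below -/
import Mathlib

section
/- Let R be a commutative ring and w : ℕ → ℕ → R a Pascal-type weight, with w-product ∘ on R[[x]]. Then for every a ∈ R[[x]] and every integer n ≥ 1, x · (a^{(n)})′ = n · (a^{(n−1)} ∘ (x · a′)), where ′ denotes the formal derivative and a^{(n)} is the n-th ∘-power of a (a^{(0)} = 1). -/
open PowerSeries

/-- A Pascal-type weight on a commutative ring `R`. -/
def IsPascalWeight {R : Type*} [CommRing R] (w : ℕ → ℕ → R) : Prop :=
  (∀ n, w n 0 = 1) ∧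
  (∀ n m, m ≤ n → w n m = w n (n - m)) ∧
  (∀ n m k, m ≤ n → w (n + k) k * w n m = w (n + k) (m + k) * w (m + k) k)

/-- The `w`-product of formal power series:
`[xⁿ](a ∘ b) = ∑_{m=0}^{n} w(n,m)·aₘ·b_{n−m}`. -/
noncomputable def wmul {R : Type*} [CommRing R] (w : ℕ → ℕ → R)
    (a b : PowerSeries R) : PowerSeries R :=
  PowerSeries.mk fun n => ∑ m ∈ Finset.range (n + 1),
    w n m * PowerSeries.coeff m a * PowerSeries.coeff (n - m) b

/-- The `n`-th `∘`-power of `a` (with `a^{(0)} = 1`). -/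
noncomputable def wpow {R : Type*} [CommRing R] (w : ℕ → ℕ → R)
    (a : PowerSeries R) : ℕ → PowerSeries R
  | 0 => 1
  | n + 1 => wmul w a (wpow w a n)

/-- The formal derivative of a power series. -/
noncomputable def pderiv {R : Type*} [CommRing R] (a : PowerSeries R) : PowerSeries R :=
  PowerSeries.mk fun n => ((n : R) + 1) * PowerSeries.coeff (n + 1) a

/-!
Let `θ = x · d/dx`, which multiplies the `n`-th coefficient by `n`. The `w`-product is graded, so
`θ` is a derivation of it for every weight `w`. The symmetry of `w` makes the `w`-product
commutative, and the last condition on `w`, a cocycle identity, makes it associative, so the power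
rule for a derivation of a commutative associative algebra applies.
-/

section WProduct

open Finset.HasAntidiagonal (antidiagonal mem_antidiagonal)

variable {R : Type*} [CommRing R]

theorem coeff_X_mul_pderiv (a : PowerSeries R) (n : ℕ) :
    coeff n (X * pderiv a) = n * coeff n a := by
  cases n with
  | zero => simp
  | succ n => rw [coeff_succ_X_mul, pderiv, coeff_mk, Nat.cast_succ]

theorem X_mul_pderiv_one : X * pderiv (1 : PowerSeries R) = 0 := by
  ext n
  rw [coeff_X_mul_pderiv, coeff_one]
  cases n <;> simp

theorem coeff_wmul (w : ℕ → ℕ → R) (a b : PowerSeries R) (n : ℕ) :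
    coeff n (wmul w a b) =
      ∑ p ∈ antidiagonal n, w n p.1 * coeff p.1 a * coeff p.2 b := by
  rw [wmul, coeff_mk, Finset.Nat.sum_antidiagonal_eq_sum_range_succ_mk]

theorem wmul_zero (w : ℕ → ℕ → R) (a : PowerSeries R) : wmul w a 0 = 0 := by
  ext n
  simp [coeff_wmul]

theorem wmul_smul {S : Type*} [Semiring S] [Module S R] [SMulCommClass S R R]
    (w : ℕ → ℕ → R) (s : S) (a b : PowerSeries R) :
    wmul w a (s • b) = s • wmul w a b := by
  ext n
  simp only [coeff_smul, coeff_wmul, mul_smul_comm, Finset.smul_sum]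

theorem X_mul_pderiv_wmul (w : ℕ → ℕ → R) (a b : PowerSeries R) :
    X * pderiv (wmul w a b) = wmul w (X * pderiv a) b + wmul w a (X * pderiv b) := by
  ext n
  simp only [map_add, coeff_X_mul_pderiv, coeff_wmul, Finset.mul_sum, ← Finset.sum_add_distrib]
  refine Finset.sum_congr rfl fun ⟨i, j⟩ hij => ?_
  obtain rfl : i + j = n := mem_antidiagonal.mp hij
  push_cast
  ring

variable {w : ℕ → ℕ → R}

theorem wmul_comm_of_symm (hsymm : ∀ i j, w (i + j) i = w (i + j) j) (a b : PowerSeries R) :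
    wmul w a b = wmul w b a := by
  ext n
  rw [coeff_wmul, coeff_wmul, ← Finset.Nat.sum_antidiagonal_swap]
  refine Finset.sum_congr rfl fun ⟨i, j⟩ hij => ?_
  obtain rfl : i + j = n := mem_antidiagonal.mp hij
  rw [Prod.fst_swap, Prod.snd_swap, hsymm, mul_right_comm]

theorem wmul_assoc_of_cocycle
    (hcocycle : ∀ i j k, w (i + j + k) (i + j) * w (i + j) i = w (i + j + k) i * w (j + k) j)
    (a b c : PowerSeries R) :
    wmul w (wmul w a b) c = wmul w a (wmul w b c) := by
  ext n
  simp only [coeff_wmul, Finset.mul_sum, Finset.sum_mul, Finset.sum_sigma']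
  refine Finset.sum_nbij' (fun ⟨⟨_, k⟩, ⟨i, j⟩⟩ => ⟨(i, j + k), (j, k)⟩)
    (fun ⟨⟨i, _⟩, ⟨j, k⟩⟩ => ⟨(i + j, k), (i, j)⟩) ?_ ?_ ?_ ?_ ?summand_eq
  case summand_eq =>
    rintro ⟨⟨m, k⟩, ⟨i, j⟩⟩ h
    simp only [Finset.mem_sigma, mem_antidiagonal] at h
    obtain ⟨rfl, rfl⟩ := h
    linear_combination (coeff i a * coeff j b * coeff k c) * hcocycle i j k
  all_goals
    rintro ⟨⟨p, q⟩, ⟨r, s⟩⟩ h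
    simp only [Finset.mem_sigma, mem_antidiagonal] at h ⊢
    grind

theorem wpow_deriv_general (hsymm : ∀ i j, w (i + j) i = w (i + j) j)
    (hcocycle : ∀ i j k, w (i + j + k) (i + j) * w (i + j) i = w (i + j + k) i * w (j + k) j)
    (a : PowerSeries R) (n : ℕ) :
    X * pderiv (wpow w a (n + 1)) = (n + 1) • wmul w (wpow w a n) (X * pderiv a) := by
  induction n with
  | zero =>
    calc X * pderiv (wmul w a 1)
        = wmul w (X * pderiv a) 1 + wmul w a (X * pderiv 1) := X_mul_pderiv_wmul w a 1
      _ = wmul w 1 (X * pderiv a) := by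
        rw [X_mul_pderiv_one, wmul_zero, add_zero, wmul_comm_of_symm hsymm]
      _ = (0 + 1) • wmul w 1 (X * pderiv a) := by rw [zero_add, one_smul]
  | succ n ih =>
    calc X * pderiv (wmul w a (wpow w a (n + 1)))
        = wmul w (X * pderiv a) (wpow w a (n + 1))
            + wmul w a (X * pderiv (wpow w a (n + 1))) := X_mul_pderiv_wmul w a _
      _ = wmul w (wpow w a (n + 1)) (X * pderiv a)
            + (n + 1) • wmul w (wmul w a (wpow w a n)) (X * pderiv a) := by
        rw [ih, ← Nat.cast_smul_eq_nsmul R, wmul_smul, Nat.cast_smul_eq_nsmul,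
          wmul_assoc_of_cocycle hcocycle, wmul_comm_of_symm hsymm (X * pderiv a)]
      _ = (n + 1 + 1) • wmul w (wpow w a (n + 1)) (X * pderiv a) := (succ_nsmul' _ _).symm

namespace IsPascalWeight

theorem symm_add (hw : IsPascalWeight w) (i j : ℕ) : w (i + j) i = w (i + j) j := by
  simpa using hw.2.1 (i + j) i (Nat.le_add_right i j)

theorem cocycle (hw : IsPascalWeight w) (i j k : ℕ) :
    w (i + j + k) (i + j) * w (i + j) i = w (i + j + k) i * w (j + k) j := by
  have h := hw.2.2 (j + k) j i (Nat.le_add_right j k)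
  rw [add_comm (j + k) i, ← add_assoc, add_comm j i] at h
  exact h.symm

end IsPascalWeight

end WProduct

/-- For a Pascal-type weight `w`, `x·(a^{(n)})′ = n·(a^{(n−1)} ∘ (x·a′))` for every
power series `a` and every `n ≥ 1`. -/
theorem wpow_deriv {R : Type*} [CommRing R] (w : ℕ → ℕ → R)
    (hw : IsPascalWeight w) (a : PowerSeries R) (n : ℕ) (hn : 1 ≤ n) :
    X * pderiv (wpow w a n) = (n : PowerSeries R) * wmul w (wpow w a (n - 1)) (X * pderiv a) := by
  obtain ⟨m, rfl⟩ := Nat.exists_eq_add_of_le' hn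
  rw [wpow_deriv_general hw.symm_add hw.cocycle, nsmul_eq_mul, Nat.add_sub_cancel]
end

section
/- Let K be a commutative ℚ-algebra, q ≥ 2 an integer, and φ, β ∈ K. Define the matrix E_φ by E_φ(qn+i, qm+j) = φ^{n−m} · C(φ, i−j) · binom(n, m) for n ≥ m and 0 ≤ i, j < q, and E_φ(N, M) = 0 when n < m. Then: (a) E_1(qn+i, qm+j) = binom(n, m) if i ≥ j and 0 if i < j (i.e. E_1 is the exponential zero generalized Pascal matrix ₍₀,q₎P_e); (b) for all M ≤ N, Σ_{K=M}^{N} E_φ(N, K) · E_β(K, M) = E_{φ+β}(N, M). -/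
/-- The generalized binomial coefficient `C(φ,k) = binom(φ+k−1, k)
= φ(φ+1)⋯(φ+k−1)/k!` for `k ≥ 0`, and `0` for `k < 0`. -/
noncomputable def genC {K : Type*} [CommRing K] [Algebra ℚ K] (φ : K) (k : ℤ) : K :=
  if 0 ≤ k then
    (∏ i ∈ Finset.range k.toNat, (φ + (i : K))) *
      algebraMap ℚ K (1 / (k.toNat.factorial : ℚ))
  else 0

/-- The matrix realizing the `φ`-th power of the exponential zero generalized Pascal
matrix `₍₀,q₎P_e`: `E_φ(qn+i, qm+j) = φ^{n−m}·C(φ, i−j)·binom(n,m)` for `n ≥ m` and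
`0 ≤ i, j < q`, and `0` when `n < m`. -/
noncomputable def Epow {K : Type*} [CommRing K] [Algebra ℚ K] (q : ℕ) (φ : K)
    (N M : ℕ) : K :=
  if M / q ≤ N / q then
    φ ^ (N / q - M / q) * genC φ ((N % q : ℕ) - (M % q : ℕ) : ℤ) *
      ((N / q).choose (M / q) : K)
  else 0

/-!
Splitting indices as `N = qn + i` with `i < q`, the matrix `E_φ` is a Kronecker product: the `n, m`
factor is the `φ`-th power of Pascal's matrix, whose `n`-th row lists the coefficients of
`(X + φ) ^ n`, and the `i, j` factor is the Toeplitz matrix of the coefficients of `(1 - X) ^ (-φ)`.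
Each factor turns sums of parameters into matrix products: the first by expanding
`((X + β) + φ) ^ n`, the second by the Chu–Vandermonde identity.
-/

open Finset

section BinomialRing

variable {R : Type*} [CommRing R] [BinomialRing R]

theorem multichoose_eq_neg_one_pow_mul_choose_neg (r : R) (n : ℕ) :
    Ring.multichoose r n = (-1) ^ n * Ring.choose (-r) n := by
  rw [Ring.choose_neg', Units.smul_def, zsmul_eq_mul, Int.cast_negOnePow_natCast, ← mul_assoc,
    ← mul_pow, neg_one_mul, neg_neg, one_pow, one_mul]

theorem multichoose_add (r s : R) (n : ℕ) :
    Ring.multichoose (r + s) n =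
      ∑ ij ∈ antidiagonal n, Ring.multichoose r ij.1 * Ring.multichoose s ij.2 := by
  simp only [multichoose_eq_neg_one_pow_mul_choose_neg]
  rw [neg_add, Ring.add_choose_eq n (Commute.all (-r) (-s)), mul_sum]
  refine sum_congr rfl fun ij hij => ?_
  rw [← mem_antidiagonal.mp hij]
  ring

end BinomialRing

section PascalPow

variable {R : Type*} [CommSemiring R]

/-- The `(n, m)` entry of the `φ`-th power of Pascal's matrix, i.e. the coefficient of `X ^ m` in
`(X + φ) ^ n`. For `n < m` the truncated exponent is harmless since `n.choose m = 0`. -/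
def pascalPow (φ : R) (n m : ℕ) : R :=
  φ ^ (n - m) * n.choose m

theorem pascalPow_eq_zero_of_lt (φ : R) {n m : ℕ} (h : n < m) : pascalPow φ n m = 0 := by
  rw [pascalPow, Nat.choose_eq_zero_of_lt h, Nat.cast_zero, mul_zero]

theorem pascalPow_one (n m : ℕ) : pascalPow (1 : R) n m = n.choose m := by
  rw [pascalPow, one_pow, one_mul]

open Polynomial in
theorem coeff_X_add_C_pow_eq_pascalPow (φ : R) (n m : ℕ) :
    ((X + C φ) ^ n).coeff m = pascalPow φ n m :=
  coeff_X_add_C_pow φ n m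

open Polynomial in
theorem X_add_C_add_pow (φ β : R) (n : ℕ) :
    (X + C (φ + β)) ^ n = ∑ a ∈ range (n + 1), C (pascalPow φ n a) * (X + C β) ^ a := by
  rw [C_add, add_comm (C φ), ← add_assoc, add_pow]
  refine sum_congr rfl fun a _ => ?_
  rw [pascalPow, C_mul, C_pow, C_eq_natCast]
  ring

theorem sum_pascalPow_mul_pascalPow (φ β : R) (n m : ℕ) :
    ∑ a ∈ range (n + 1), pascalPow φ n a * pascalPow β a m = pascalPow (φ + β) n m := by
  simp only [← coeff_X_add_C_pow_eq_pascalPow (φ + β), X_add_C_add_pow, Polynomial.finsetSum_coeff,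
    Polynomial.coeff_C_mul, coeff_X_add_C_pow_eq_pascalPow]

end PascalPow

section Sums

variable {M : Type*} [AddCommMonoid M]

theorem sum_Icc_eq_sum_range {f : ℕ → M} {m n l : ℕ} (hnl : n < l)
    (f_of_lt : ∀ k < m, f k = 0) (f_of_gt : ∀ k > n, f k = 0) :
    ∑ k ∈ Icc m n, f k = ∑ k ∈ range l, f k := by
  refine sum_subset (fun k hk => mem_range.mpr ((mem_Icc.mp hk).2.trans_lt hnl)) fun k _ hk => ?_
  rcases lt_or_ge k m with hkm | hmk
  · exact f_of_lt k hkm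
  · exact f_of_gt k (not_le.mp fun hkn => hk (mem_Icc.mpr ⟨hmk, hkn⟩))

theorem sum_range_mul_div_mod {q : ℕ} (hq : 0 < q) (n : ℕ) (f : ℕ → ℕ → M) :
    ∑ k ∈ range (q * n), f (k / q) (k % q) = ∑ a ∈ range n, ∑ b ∈ range q, f a b := by
  induction n with
  | zero => rw [mul_zero, range_zero, sum_empty, sum_empty]
  | succ n ih =>
    rw [Nat.mul_succ, sum_range_add, ih, sum_range_succ]
    congr 1
    refine sum_congr rfl fun b hb => ?_
    have hbq : b < q := mem_range.mp hb
    rw [Nat.mul_add_div hq, Nat.div_eq_of_lt hbq, add_zero, Nat.mul_add_mod, Nat.mod_eq_of_lt hbq]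

end Sums

theorem eval_ascPochhammer_eq_prod_range {S : Type*} [CommSemiring S] (n : ℕ) (r : S) :
    (ascPochhammer S n).eval r = ∏ i ∈ range n, (r + (i : S)) := by
  induction n with
  | zero => simp
  | succ n ih => rw [ascPochhammer_succ_eval, ih, prod_range_succ]

section Algebra

variable {K : Type*} [CommRing K] [Algebra ℚ K]

theorem genC_of_neg (φ : K) {k : ℤ} (hk : k < 0) : genC φ k = 0 :=
  if_neg hk.not_ge

theorem factorial_nsmul_genC_natCast (φ : K) (n : ℕ) :
    n.factorial • genC φ n = ∏ i ∈ range n, (φ + (i : K)) := by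
  have factorial_mul_inv :
      (n.factorial : K) * algebraMap ℚ K (1 / (n.factorial : ℚ)) = 1 := by
    rw [← map_natCast (algebraMap ℚ K), ← map_mul,
      mul_one_div_cancel (Nat.cast_ne_zero.mpr n.factorial_ne_zero), map_one]
  rw [genC, if_pos n.cast_nonneg, Int.toNat_natCast, nsmul_eq_mul, mul_left_comm,
    factorial_mul_inv, mul_one]

/-- A commutative `ℚ`-algebra is a binomial ring. Its `multichoose` is taken to be `genC` itself, so
that Mathlib's results on `Ring.multichoose` apply to `genC` definitionally. -/
noncomputable local instance binomialRingOfAlgebraRat : BinomialRing K where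
  toIsAddTorsionFree := .of_module_rat K
  multichoose φ n := genC φ n
  factorial_nsmul_multichoose φ n := by
    rw [factorial_nsmul_genC_natCast, Polynomial.ascPochhammer_smeval_eq_eval,
      eval_ascPochhammer_eq_prod_range]

theorem genC_natCast (φ : K) (n : ℕ) : genC φ n = Ring.multichoose φ n :=
  rfl

theorem genC_one (k : ℤ) : genC (1 : K) k = if 0 ≤ k then 1 else 0 := by
  split_ifs with hk
  · lift k to ℕ using hk
    rw [genC_natCast, Ring.multichoose_one]
  · exact genC_of_neg 1 (not_le.mp hk)

theorem sum_antidiagonal_genC_mul_genC (φ β : K) (n : ℕ) :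
    ∑ p ∈ antidiagonal n, genC φ p.1 * genC β p.2 = genC (φ + β) n :=
  (multichoose_add φ β n).symm

theorem sum_Icc_genC_sub_mul_genC_sub (φ β : K) (i j : ℕ) :
    ∑ b ∈ Icc j i, genC φ (i - b : ℤ) * genC β (b - j : ℤ) = genC (φ + β) (i - j : ℤ) := by
  rcases lt_or_ge i j with hij | hji
  · rw [Icc_eq_empty hij.not_ge, sum_empty, genC_of_neg _ (by lia)]
  · rw [← Nat.cast_sub hji, ← sum_antidiagonal_genC_mul_genC]
    refine sum_nbij' (fun b => (i - b, b - j)) (fun p => j + p.2) ?_ ?_ ?_ ?_ ?_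
    all_goals simp only [mem_Icc, HasAntidiagonal.mem_antidiagonal, Prod.forall, Prod.mk.injEq]
    iterate 4 lia
    · rintro b ⟨hjb, hbi⟩
      rw [Nat.cast_sub hjb, Nat.cast_sub hbi]

theorem sum_range_genC_sub_mul_genC_sub (φ β : K) {q i : ℕ} (hi : i < q) (j : ℕ) :
    ∑ b ∈ range q, genC φ (i - b : ℤ) * genC β (b - j : ℤ) = genC (φ + β) (i - j : ℤ) := by
  rw [← sum_Icc_genC_sub_mul_genC_sub, sum_Icc_eq_sum_range hi]
  · intro b hbj
    rw [genC_of_neg β (by lia), mul_zero]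
  · intro b hib
    rw [genC_of_neg φ (by lia), zero_mul]

theorem Epow_eq_pascalPow_mul_genC (q : ℕ) (φ : K) (N M : ℕ) :
    Epow q φ N M = pascalPow φ (N / q) (M / q) * genC φ ((N % q : ℕ) - (M % q : ℕ) : ℤ) := by
  rw [Epow]
  split_ifs with h
  · rw [pascalPow, mul_right_comm]
  · rw [pascalPow_eq_zero_of_lt φ (not_le.mp h), zero_mul]

theorem Epow_eq_zero_of_lt (q : ℕ) (φ : K) {N M : ℕ} (h : N < M) : Epow q φ N M = 0 := by
  rw [Epow_eq_pascalPow_mul_genC]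
  rcases (Nat.div_le_div_right h.le : N / q ≤ M / q).lt_or_eq with hlt | heq
  · rw [pascalPow_eq_zero_of_lt φ hlt, zero_mul]
  · have hmod : N % q < M % q := by
      have hN := Nat.div_add_mod N q
      have hM := Nat.div_add_mod M q
      rw [heq] at hN
      lia
    rw [genC_of_neg φ (by lia), mul_zero]

theorem Epow_one (q n m : ℕ) {i j : ℕ} (hi : i < q) (hj : j < q) :
    Epow q (1 : K) (q * n + i) (q * m + j) = if j ≤ i then (n.choose m : K) else 0 := by
  have hq : 0 < q := i.zero_le.trans_lt hi
  rw [Epow_eq_pascalPow_mul_genC, pascalPow_one, genC_one, Nat.mul_add_div hq, Nat.mul_add_div hq,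
    Nat.mul_add_mod, Nat.mul_add_mod, Nat.div_eq_of_lt hi, Nat.div_eq_of_lt hj,
    Nat.mod_eq_of_lt hi, Nat.mod_eq_of_lt hj, add_zero, add_zero, mul_ite, mul_one, mul_zero]
  simp only [sub_nonneg, Nat.cast_le]

theorem sum_range_Epow_mul_Epow {q : ℕ} (hq : 0 < q) (φ β : K) (N M : ℕ) :
    ∑ k ∈ range (q * (N / q + 1)), Epow q φ N k * Epow q β k M = Epow q (φ + β) N M := by
  simp only [Epow_eq_pascalPow_mul_genC, mul_mul_mul_comm (pascalPow φ _ _)]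
  rw [sum_range_mul_div_mod hq (N / q + 1) fun a b =>
      pascalPow φ (N / q) a * pascalPow β a (M / q) *
        (genC φ ((N % q : ℕ) - b : ℤ) * genC β (b - (M % q : ℕ) : ℤ)),
    ← sum_mul_sum, sum_pascalPow_mul_pascalPow,
    sum_range_genC_sub_mul_genC_sub φ β (Nat.mod_lt N hq)]

theorem sum_Icc_Epow_mul_Epow {q : ℕ} (hq : 0 < q) (φ β : K) (N M : ℕ) :
    ∑ k ∈ Icc M N, Epow q φ N k * Epow q β k M = Epow q (φ + β) N M := by
  rw [← sum_range_Epow_mul_Epow hq, sum_Icc_eq_sum_range (Nat.lt_mul_div_succ N hq)]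
  · intro k hkM
    rw [Epow_eq_zero_of_lt q β hkM, mul_zero]
  · intro k hNk
    rw [Epow_eq_zero_of_lt q φ hNk, zero_mul]

end Algebra

/-- (a) `E₁` is the exponential zero generalized Pascal matrix `₍₀,q₎P_e`:
`E₁(qn+i, qm+j) = binom(n,m)` if `i ≥ j` and `0` if `i < j`;
(b) the family `E_φ` satisfies `E_φ · E_β = E_{φ+β}`. -/
theorem Epow_one_and_mul {K : Type*} [CommRing K] [Algebra ℚ K]
    (q : ℕ) (hq : 2 ≤ q) (φ β : K) :
    (∀ n m i j : ℕ, i < q → j < q →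
      Epow q (1 : K) (q * n + i) (q * m + j) =
        if j ≤ i then (n.choose m : K) else 0) ∧
    (∀ N M : ℕ, M ≤ N →
      ∑ k ∈ Finset.Icc M N, Epow q φ N k * Epow q β k M = Epow q (φ + β) N M) :=
  ⟨fun n m _ _ hi hj => Epow_one q n m hi hj,
    fun N M _ => sum_Icc_Epow_mul_Epow (zero_lt_two.trans_le hq) φ β N M⟩
end
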